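/- Let F be a finite field with q elements, n ≥ 2, and let k_1, …, k_{n-1} be natural numbers. Then #P_{n;k_1,…,k_{n-1},0} = q^{k_1 + k_2 + ⋯ + k_{n-1}} · #P_{n-1;k_1,…,k_{n-1}}. -/

import Mathlib

/-!
In the columns of degree `0` a matrix agrees with its constant-term matrix `1`, so it is block lower
triangular with blocks `B`, `0`, `C`, `1`. Such a matrix is invertible exactly when `B` is, and then
`B` ranges over the smaller set, while the entries in column `j` of `C` are arbitrary polynomials of
degree at most `k j` without constant term, of which there are `q ^ k j`.
-/

open Polynomial Matrix

/-- `P_{m;k₁,…,k_m}`: the set of `A ∈ GL_m(F[x])` with `deg a_{i,j} ≤ k_j` for all `i, j` and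
constant-term matrix equal to the identity. -/
def Pset (F : Type*) [Field F] (m : ℕ) (k : Fin m → ℕ) : Set (GL (Fin m) F[X]) :=
  {A | (∀ i j, ((A : Matrix (Fin m) (Fin m) F[X]) i j).degree ≤ (k j : ℕ)) ∧
       (A : Matrix (Fin m) (Fin m) F[X]).map (fun p => p.coeff 0) = 1}

section degreeLEWithConst

variable {R : Type*} [Semiring R]

/-- The polynomials of degree at most `n` with constant term `c`. -/
def degreeLEWithConst (n : ℕ) (c : R) : Set R[X] :=
  {p | p.degree ≤ n ∧ p.coeff 0 = c}

lemma mem_degreeLEWithConst_zero {c : R} {p : R[X]} :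
    p ∈ degreeLEWithConst 0 c ↔ p = C c := by
  constructor
  · rintro ⟨hdeg, rfl⟩
    exact eq_C_of_degree_le_zero hdeg
  · rintro rfl
    exact ⟨degree_C_le, coeff_C_zero⟩

lemma degree_X_mul_add_C_le_iff {n : ℕ} {c : R} {p : R[X]} :
    (X * p + C c).degree ≤ (n : WithBot ℕ) ↔ p.degree < n := by
  simp only [degree_le_iff_coeff_zero, degree_lt_iff_coeff_zero, Nat.cast_lt]
  constructor
  · intro h m hm
    simpa using h (m + 1) (Nat.lt_succ_of_le hm)
  · rintro h (_ | m) hm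
    · exact absurd hm n.not_lt_zero
    · simpa using h m (Nat.le_of_lt_succ hm)

lemma image_degreeLT_X_mul_add_C (n : ℕ) (c : R) :
    (fun p ↦ X * p + C c) '' (degreeLT R n : Set R[X]) = degreeLEWithConst n c := by
  ext p
  constructor
  · rintro ⟨r, hr, rfl⟩
    exact ⟨degree_X_mul_add_C_le_iff.2 (mem_degreeLT.1 hr), by simp⟩
  · rintro ⟨hdeg, rfl⟩
    refine ⟨p.divX, mem_degreeLT.2 ?_, X_mul_divX_add p⟩
    rwa [← X_mul_divX_add p, degree_X_mul_add_C_le_iff] at hdeg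

lemma X_mul_add_C_injective (c : R) : Function.Injective fun p : R[X] ↦ X * p + C c := by
  intro p r h
  ext n
  simpa [coeff_C_succ] using congrArg (coeff · (n + 1)) h

lemma encard_degreeLT (n : ℕ) : (degreeLT R n : Set R[X]).encard = ENat.card R ^ n :=
  calc (degreeLT R n : Set R[X]).encard
      = ENat.card (Fin n → R) := ENat.card_congr (degreeLTEquiv R n).toEquiv
    _ = ENat.card R ^ n := by simp [ENat.card_fun]

lemma encard_degreeLEWithConst (n : ℕ) (c : R) :
    (degreeLEWithConst n c).encard = ENat.card R ^ n := by
  rw [← image_degreeLT_X_mul_add_C, (X_mul_add_C_injective c).encard_image, encard_degreeLT]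

end degreeLEWithConst

section matrixDegreeLEWithConst

variable {R ι ι' κ κ' : Type*} [Semiring R]

/-- The polynomial matrices with constant-term matrix `M` whose column `j` has degree at most
`k j`. -/
def matrixDegreeLEWithConst (k : ι → ℕ) (M : Matrix κ ι R) : Set (Matrix κ ι R[X]) :=
  {A | ∀ i j, A i j ∈ degreeLEWithConst (k j) (M i j)}

lemma mem_matrixDegreeLEWithConst_zero {M : Matrix κ ι R} {A : Matrix κ ι R[X]} :
    A ∈ matrixDegreeLEWithConst 0 M ↔ A = M.map C := by
  simp only [matrixDegreeLEWithConst, Set.mem_ofPred_eq, Pi.zero_apply,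
    mem_degreeLEWithConst_zero, ← Matrix.ext_iff, map_apply]

lemma fromBlocks_mem_matrixDegreeLEWithConst {k : ι → ℕ} {l : ι' → ℕ}
    {M₁₁ : Matrix κ ι R} {M₁₂ : Matrix κ ι' R} {M₂₁ : Matrix κ' ι R} {M₂₂ : Matrix κ' ι' R}
    {A₁₁ : Matrix κ ι R[X]} {A₁₂ : Matrix κ ι' R[X]}
    {A₂₁ : Matrix κ' ι R[X]} {A₂₂ : Matrix κ' ι' R[X]} :
    fromBlocks A₁₁ A₁₂ A₂₁ A₂₂ ∈
        matrixDegreeLEWithConst (Sum.elim k l) (fromBlocks M₁₁ M₁₂ M₂₁ M₂₂) ↔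
      (A₁₁ ∈ matrixDegreeLEWithConst k M₁₁ ∧ A₁₂ ∈ matrixDegreeLEWithConst l M₁₂) ∧
        A₂₁ ∈ matrixDegreeLEWithConst k M₂₁ ∧ A₂₂ ∈ matrixDegreeLEWithConst l M₂₂ := by
  simp only [matrixDegreeLEWithConst, Set.mem_ofPred_eq, Sum.forall, fromBlocks_apply₁₁,
    fromBlocks_apply₁₂, fromBlocks_apply₂₁, fromBlocks_apply₂₂, Sum.elim_inl, Sum.elim_inr,
    forall_and]
  exact and_and_and_comm

lemma submatrix_mem_matrixDegreeLEWithConst (f : κ' ≃ κ) (e : ι' ≃ ι) {k : ι → ℕ}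
    {M : Matrix κ ι R} {A : Matrix κ ι R[X]} :
    A.submatrix f e ∈ matrixDegreeLEWithConst (k ∘ e) (M.submatrix f e) ↔
      A ∈ matrixDegreeLEWithConst k M := by
  simp only [matrixDegreeLEWithConst, Set.mem_ofPred_eq, submatrix_apply, Function.comp_apply,
    f.forall_congr_left, e.forall_congr_left, Equiv.apply_symm_apply]

lemma encard_matrixDegreeLEWithConst [Fintype ι] [Fintype κ] (k : ι → ℕ) (M : Matrix κ ι R) :
    (matrixDegreeLEWithConst k M).encard = ENat.card R ^ (Fintype.card κ * ∑ j, k j) := by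
  have himage : of '' (Set.univ.pi fun i ↦ Set.univ.pi fun j ↦ degreeLEWithConst (k j) (M i j)) =
      matrixDegreeLEWithConst k M := by
    ext A
    simp [matrixDegreeLEWithConst, Equiv.image_eq_preimage_symm, Set.mem_pi]
  rw [← himage, of.injective.encard_image]
  simp only [Set.encard_pi_eq_prod_encard, encard_degreeLEWithConst, Finset.prod_pow_eq_pow_sum,
    Finset.sum_const, Finset.card_univ, smul_eq_mul]

end matrixDegreeLEWithConst

lemma fromBlocks_injective {α ι ι' κ κ' : Type*} (B : Matrix κ ι' α) (D : Matrix κ' ι' α) :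
    Function.Injective fun A : Matrix κ' ι α × Matrix κ ι α ↦ fromBlocks A.2 B A.1 D := by
  rintro ⟨C, A⟩ ⟨C', A'⟩ h
  obtain ⟨rfl, -, rfl, -⟩ := fromBlocks_inj.1 h
  rfl

section invertibleDegreeLE

variable {R ι κ : Type*} [CommRing R] [Fintype ι] [DecidableEq ι] [Fintype κ] [DecidableEq κ]

/-- The analogue of `Pset` over a commutative ring and an arbitrary finite index type, as a set of
matrices instead of elements of the general linear group so that blocks can be taken directly. -/
def invertibleDegreeLE (R : Type*) [CommRing R] (k : ι → ℕ) : Set (Matrix ι ι R[X]) :=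
  {A | IsUnit A ∧ A ∈ matrixDegreeLEWithConst k 1}

lemma fromBlocks_mem_invertibleDegreeLE {k : ι → ℕ} {A₁₁ : Matrix ι ι R[X]}
    {A₁₂ : Matrix ι κ R[X]} {A₂₁ : Matrix κ ι R[X]} {A₂₂ : Matrix κ κ R[X]} :
    fromBlocks A₁₁ A₁₂ A₂₁ A₂₂ ∈ invertibleDegreeLE R (Sum.elim k 0) ↔
      A₁₁ ∈ invertibleDegreeLE R k ∧ A₁₂ = 0 ∧ A₂₁ ∈ matrixDegreeLEWithConst k 0 ∧ A₂₂ = 1 := by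
  simp only [invertibleDegreeLE, Set.mem_ofPred_eq, ← fromBlocks_one,
    fromBlocks_mem_matrixDegreeLEWithConst, mem_matrixDegreeLEWithConst_zero,
    Matrix.map_zero _ C_0, Matrix.map_one _ C_0 C_1]
  constructor
  · rintro ⟨hunit, ⟨h₁₁, rfl⟩, h₂₁, rfl⟩
    exact ⟨⟨(isUnit_fromBlocks_zero₁₂.1 hunit).1, h₁₁⟩, rfl, h₂₁, rfl⟩
  · rintro ⟨⟨hunit, h₁₁⟩, rfl, h₂₁, rfl⟩
    exact ⟨isUnit_fromBlocks_zero₁₂.2 ⟨hunit, isUnit_one⟩, ⟨h₁₁, rfl⟩, h₂₁, rfl⟩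

lemma image_fromBlocks_invertibleDegreeLE (k : ι → ℕ) :
    (fun A : Matrix κ ι R[X] × Matrix ι ι R[X] ↦ fromBlocks A.2 0 A.1 1) ''
        (matrixDegreeLEWithConst k 0 ×ˢ invertibleDegreeLE R k) =
      invertibleDegreeLE R (Sum.elim k 0) := by
  ext A
  constructor
  · rintro ⟨⟨A₂₁, A₁₁⟩, ⟨h₂₁, h₁₁⟩, rfl⟩
    exact fromBlocks_mem_invertibleDegreeLE.2 ⟨h₁₁, rfl, h₂₁, rfl⟩
  · intro hA
    rw [← fromBlocks_toBlocks A] at hA ⊢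
    obtain ⟨h₁₁, h₁₂, h₂₁, h₂₂⟩ := fromBlocks_mem_invertibleDegreeLE.1 hA
    exact ⟨(A.toBlocks₂₁, A.toBlocks₁₁), ⟨h₂₁, h₁₁⟩, by rw [h₁₂, h₂₂]⟩

lemma submatrix_mem_invertibleDegreeLE (e : κ ≃ ι) {k : ι → ℕ} {A : Matrix ι ι R[X]} :
    A.submatrix e e ∈ invertibleDegreeLE R (k ∘ e) ↔ A ∈ invertibleDegreeLE R k := by
  rw [invertibleDegreeLE, Set.mem_ofPred_eq, isUnit_submatrix_equiv, ← submatrix_one_equiv e,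
    submatrix_mem_matrixDegreeLEWithConst]
  rfl

lemma encard_invertibleDegreeLE_comp (R : Type*) [CommRing R] (e : κ ≃ ι) (k : ι → ℕ) :
    (invertibleDegreeLE R (k ∘ e)).encard = (invertibleDegreeLE R k).encard :=
  (Set.encard_congr <| (reindex e.symm e.symm).subtypeEquiv fun _ ↦
    (submatrix_mem_invertibleDegreeLE e).symm).symm

theorem stmt_8_general (R : Type*) [CommRing R] (k : ι → ℕ) :
    (invertibleDegreeLE R (Sum.elim k (0 : κ → ℕ))).encard =
      ENat.card R ^ (Fintype.card κ * ∑ j, k j) * (invertibleDegreeLE R k).encard := by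
  rw [← image_fromBlocks_invertibleDegreeLE, (fromBlocks_injective 0 1).encard_image,
    Set.encard_prod, encard_matrixDegreeLEWithConst]

end invertibleDegreeLE

lemma image_val_Pset {F : Type*} [Field F] {m : ℕ} (k : Fin m → ℕ) :
    Units.val '' Pset F m k = invertibleDegreeLE F k := by
  ext A
  constructor
  · rintro ⟨A, ⟨hdeg, hconst⟩, rfl⟩
    exact ⟨A.isUnit, fun i j ↦ ⟨hdeg i j, congrFun₂ hconst i j⟩⟩
  · rintro ⟨⟨A, rfl⟩, hA⟩
    exact ⟨A, ⟨fun i j ↦ (hA i j).1, Matrix.ext fun i j ↦ (hA i j).2⟩, rfl⟩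

lemma encard_Pset {F : Type*} [Field F] {m : ℕ} (k : Fin m → ℕ) :
    (Pset F m k).encard = (invertibleDegreeLE F k).encard := by
  rw [← image_val_Pset, Units.val_injective.encard_image]

/-- For `n ≥ 2`,
`#P_{n;k₁,…,k_{n-1},0} = q^{k₁ + ⋯ + k_{n-1}} · #P_{n-1;k₁,…,k_{n-1}}`. -/
theorem stmt_8 (F : Type*) [Field F] [Fintype F] (q : ℕ) (hq : Fintype.card F = q)
    (n : ℕ) (hn : 2 ≤ n) (k : Fin (n - 1) → ℕ) :
    (Pset F n (fun j : Fin n => if h : (j : ℕ) < n - 1 then k ⟨j, h⟩ else 0)).ncard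
      = q ^ (∑ j, k j) * (Pset F (n - 1) k).ncard := by
  let e : Fin (n - 1) ⊕ Fin 1 ≃ Fin n := finSumFinEquiv.trans (finCongr (by omega))
  have hk : (fun j : Fin n ↦ if h : (j : ℕ) < n - 1 then k ⟨j, h⟩ else 0) ∘ e = Sum.elim k 0 := by
    ext (j | j) <;> simp [e]
  have hcard : ENat.card F = q := by rw [ENat.card_eq_coe_fintype_card, hq]
  simp only [Set.ncard, encard_Pset]
  rw [← encard_invertibleDegreeLE_comp F e, hk, stmt_8_general, hcard, Fintype.card_fin, one_mul,
    ENat.toNat_mul, ← Nat.cast_pow, ENat.toNat_natCast]
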